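/- arXiv:2401.10847 — 2 statements merged into one kernel-verified Lean document; each statement's English description precedes it below -/
import Mathlib

section
/- Let 𝓕 be a non-empty family of finite graphs, each having at least one edge, and let H be a finite graph with no isolated vertices. For each integer j ≥ 0 let H_j denote the graph obtained from H by adding j isolated vertices. If 2 ≤ k ≤ ℓ ≤ m are integers such that H_k and H_m are both 𝓕-saturated, then H_ℓ is 𝓕-saturated. -/
open SimpleGraph Filter Topology

/-- `H` (on `β`) is contained in `G` (on `α`): `G` has a subgraph isomorphic to `H`. -/
def Contains {α β : Type*} (G : SimpleGraph α) (H : SimpleGraph β) : Prop :=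
  ∃ f : β ↪ α, ∀ a b : β, H.Adj a b → G.Adj (f a) (f b)

/-- A family of finite graphs, each given on a vertex set `Fin n`. -/
abbrev GraphFam := Set ((n : ℕ) × SimpleGraph (Fin n))

/-- `G` is `𝓕`-saturated: `G` contains no member of `𝓕`, but adding any missing edge to `G`
creates a member of `𝓕`. -/
def FamSaturated (𝓕 : GraphFam) {α : Type*} (G : SimpleGraph α) : Prop :=
  (∀ F ∈ 𝓕, ¬ Contains G F.2) ∧
    ∀ u v : α, u ≠ v → ¬ G.Adj u v →
      ∃ F ∈ 𝓕, Contains (G ⊔ SimpleGraph.fromEdgeSet {s(u, v)}) F.2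

/-- `sat n 𝓕` is the minimum number of edges in an `𝓕`-saturated graph on `n` vertices. -/
noncomputable def sat (n : ℕ) (𝓕 : GraphFam) : ℕ :=
  sInf {m | ∃ G : SimpleGraph (Fin n), FamSaturated 𝓕 G ∧ Nat.card G.edgeSet = m}

/-- The disjoint union of two graphs. -/
def disjUnionG {α β : Type*} (G : SimpleGraph α) (H : SimpleGraph β) : SimpleGraph (α ⊕ β) :=
  SimpleGraph.fromRel (fun x y =>
    match x, y with
    | Sum.inl a, Sum.inl b => G.Adj a b
    | Sum.inr a, Sum.inr b => H.Adj a b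
    | _, _ => False)

/-- `H ∪ kT`: the disjoint union of `H` with `k` copies of `T`. -/
def unionCopies {α β : Type*} (H : SimpleGraph α) (k : ℕ) (T : SimpleGraph β) :
    SimpleGraph (α ⊕ Fin k × β) :=
  SimpleGraph.fromRel (fun x y =>
    match x, y with
    | Sum.inl a, Sum.inl b => H.Adj a b
    | Sum.inr (i, a), Sum.inr (j, b) => i = j ∧ T.Adj a b
    | _, _ => False)

/-!
Being `𝓕`-free passes down from `H_m` to its subgraph `H_ℓ`. A missing edge of `H_ℓ` has at most
two ends among the isolated vertices, so `2 ≤ k ≤ ℓ` leaves room for a copy of `H_k` in `H_ℓ`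
containing both ends. The edge is missing in that copy as well, and adding it there already creates
a member of `𝓕`.
-/

theorem contains_iff_isContained {α β : Type*} {G : SimpleGraph α} {H : SimpleGraph β} :
    Contains G H ↔ H ⊑ G :=
  ⟨fun ⟨f, hf⟩ => ⟨⟨f, hf _ _⟩, f.injective⟩,
    fun ⟨f⟩ => ⟨f.toEmbedding, fun _ _ => f.toHom.map_adj⟩⟩

theorem disjUnionG_eq_sum {α β : Type*} (G : SimpleGraph α) (H : SimpleGraph β) :
    disjUnionG G H = G ⊕g H := by
  ext (x | x) (y | y) <;> simp +contextual [disjUnionG, adj_comm, G.ne_of_adj, H.ne_of_adj]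

theorem sup_edge_isContained_sup_edge {V W : Type*} {K : SimpleGraph V} {G : SimpleGraph W}
    (φ : Copy K G) (u v : V) : K ⊔ edge u v ⊑ G ⊔ edge (φ u) (φ v) := by
  refine ⟨⟨φ, fun {a b} hab => ?_⟩, φ.injective⟩
  rw [sup_adj, edge_adj] at hab ⊢
  refine hab.imp φ.toHom.map_adj fun ⟨hends, hne⟩ => ⟨?_, φ.injective.ne hne⟩
  exact hends.imp (.imp (congrArg φ) (congrArg φ)) (.imp (congrArg φ) (congrArg φ))

theorem FamSaturated.of_forall_exists_copy {𝓕 : GraphFam} {V W : Type*} {K : SimpleGraph V}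
    {G : SimpleGraph W} (hK : FamSaturated 𝓕 K) (hG : ∀ F ∈ 𝓕, F.2.Free G)
    (hcopy : ∀ u v : W, ∃ φ : Copy K G, u ∈ Set.range φ ∧ v ∈ Set.range φ) :
    FamSaturated 𝓕 G := by
  refine ⟨fun F hF hc => hG F hF (contains_iff_isContained.1 hc), fun u v huv hadj => ?_⟩
  obtain ⟨φ, ⟨a, rfl⟩, ⟨b, rfl⟩⟩ := hcopy u v
  obtain ⟨F, hF, hc⟩ := hK.2 a b (ne_of_apply_ne φ huv) (mt φ.toHom.map_adj hadj)
  exact ⟨F, hF, contains_iff_isContained.2 <|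
    (contains_iff_isContained.1 hc).trans (sup_edge_isContained_sup_edge φ a b)⟩

theorem exists_embedding_mem_range {β γ : Type*} [Nontrivial β] (i : β ↪ γ) (c d : γ) :
    ∃ g : β ↪ γ, c ∈ Set.range g ∧ d ∈ Set.range g := by
  classical
  obtain ⟨a, b, hab⟩ := exists_pair_ne β
  obtain rfl | hcd := eq_or_ne c d
  · exact ⟨i.setValue a c, ⟨a, i.setValue_eq a c⟩, ⟨a, i.setValue_eq a c⟩⟩
  · obtain ⟨σ, hσa, hσb⟩ := MulAction.is_two_pretransitive_iff.1
      (Equiv.Perm.isMultiplyPretransitive γ 2) (i.injective.ne hab) hcd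
    exact ⟨i.trans σ.toEmbedding, ⟨a, hσa⟩, ⟨b, hσb⟩⟩

/-- The copy of `H` with isolated vertices `β` inside `H` with isolated vertices `γ` that an
injection `β ↪ γ` provides, keeping `H` fixed. -/
def sumBotCopy {α β γ : Type*} (H : SimpleGraph α) (g : β ↪ γ) :
    Copy (H ⊕g (⊥ : SimpleGraph β)) (H ⊕g (⊥ : SimpleGraph γ)) :=
  (Embedding.refl.sum (Embedding.comap g ⊥)).toCopy

@[simp]
theorem coe_sumBotCopy {α β γ : Type*} (H : SimpleGraph α) (g : β ↪ γ) :
    ⇑(sumBotCopy H g) = Sum.map id g :=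
  rfl

theorem mem_range_sumBotCopy {α β γ : Type*} {H : SimpleGraph α} {g : β ↪ γ} {w : α ⊕ γ} :
    w ∈ Set.range (sumBotCopy H g) ↔ ∀ c, w = .inr c → c ∈ Set.range g := by
  rcases w with a | c <;> simp

theorem exists_copy_sum_bot_mem_range {α β γ : Type*} [Nontrivial β] (H : SimpleGraph α)
    (i : β ↪ γ) (u v : α ⊕ γ) :
    ∃ φ : Copy (H ⊕g (⊥ : SimpleGraph β)) (H ⊕g (⊥ : SimpleGraph γ)),
      u ∈ Set.range φ ∧ v ∈ Set.range φ := by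
  obtain ⟨z⟩ : Nonempty γ := .map i inferInstance
  obtain ⟨g, hu, hv⟩ := exists_embedding_mem_range i (u.elim (fun _ => z) id)
    (v.elim (fun _ => z) id)
  refine ⟨sumBotCopy H g, mem_range_sumBotCopy.2 ?_, mem_range_sumBotCopy.2 ?_⟩
  · rintro c rfl
    exact hu
  · rintro c rfl
    exact hv

theorem stmt15_general {𝓕 : GraphFam} {α β γ δ : Type*} [Nontrivial β] (H : SimpleGraph α)
    (i : β ↪ γ) (j : γ ↪ δ) (hβ : FamSaturated 𝓕 (disjUnionG H (⊥ : SimpleGraph β)))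
    (hδ : ∀ F ∈ 𝓕, ¬ Contains (disjUnionG H (⊥ : SimpleGraph δ)) F.2) :
    FamSaturated 𝓕 (disjUnionG H (⊥ : SimpleGraph γ)) := by
  simp only [disjUnionG_eq_sum, contains_iff_isContained] at hβ hδ ⊢
  have hγ : ∀ F ∈ 𝓕, F.2.Free (H ⊕g (⊥ : SimpleGraph γ)) :=
    fun F hF hc => hδ F hF (hc.trans ⟨sumBotCopy H j⟩)
  exact hβ.of_forall_exists_copy hγ (exists_copy_sum_bot_mem_range H i)

/-- If `H` has no isolated vertices and `H` plus `k` isolated vertices and `H` plus `m` isolated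
vertices are both `𝓕`-saturated, where `2 ≤ k ≤ ℓ ≤ m`, then `H` plus `ℓ` isolated vertices is
`𝓕`-saturated. -/
theorem stmt15 (𝓕 : GraphFam) (h1 : 𝓕.Nonempty) (h2 : ∀ F ∈ 𝓕, 1 ≤ Nat.card F.2.edgeSet)
    {nH : ℕ} (H : SimpleGraph (Fin nH)) (hiso : ∀ v, (H.neighborSet v).Nonempty)
    (k ℓ m : ℕ) (hk : 2 ≤ k) (hkl : k ≤ ℓ) (hlm : ℓ ≤ m)
    (hsatk : FamSaturated 𝓕 (disjUnionG H (⊥ : SimpleGraph (Fin k))))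
    (hsatm : FamSaturated 𝓕 (disjUnionG H (⊥ : SimpleGraph (Fin m)))) :
    FamSaturated 𝓕 (disjUnionG H (⊥ : SimpleGraph (Fin ℓ))) := by
  have : Nontrivial (Fin k) := Fin.nontrivial_iff_two_le.2 hk
  exact stmt15_general H (Fin.castLEEmb hkl) (Fin.castLEEmb hlm) hsatk hsatm.1
end

section
/- Let 𝓕 be a non-empty quasi-finite family of finite graphs, each having at least one edge. Then for every integer r ≥ 1 there is a constant C_r such that every 𝓕-saturated graph G on n vertices that is not isomorphic to H ∪ kT for any 𝓕-saturated blueprint (H,T) with |V(T)| < r and any integer k ≥ 0 has at least (1 − 1/r)·n − C_r edges. -/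
open SimpleGraph Filter Topology

/-- `𝓕` is quasi-finite: for every tree `T` there is a constant `C` such that every graph in `𝓕`
has at most `C` connected components isomorphic to `T`. -/
def QuasiFinite (𝓕 : GraphFam) : Prop :=
  ∀ (t : ℕ) (T : SimpleGraph (Fin t)), T.IsTree →
    ∃ C : ℕ, ∀ F ∈ 𝓕,
      Nat.card {c : F.2.ConnectedComponent // Nonempty (SimpleGraph.induce c.supp F.2 ≃g T)} ≤ C

/-- `C` is a residue class modulo `r`, viewed as a subset of the non-negative integers. -/
def ResidueClass (r : ℕ) (C : Set ℕ) : Prop := ∃ c < r, C = {n : ℕ | n % r = c}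

/-! Every component of `G` other than a tree on fewer than `r` vertices has at least `1 - 1/r` edges
per vertex, so a graph with too few edges has many components isomorphic to one small tree `T`,
that is, `G ≅ H ∪ kT` with `k` large. Quasi-finiteness bounds by some `M` the number of small tree
components of each member `F` of the family. A copy of `F` in `H ∪ lT` contains a whole component
of `F`, which is a small tree, in every copy of `T` it meets, so it meets at most `M` of them and
can be moved into `H ∪ kT` as soon as `M ≤ k`. Conversely, two vertices of `H ∪ lT` meet at most
two copies of `T`, so if `2 ≤ k ≤ l` they lie in a copy of `H ∪ kT`. Hence saturation of `H ∪ kT`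
passes to all `H ∪ lT` with `l ≥ k`, and `(H, T)` is a saturated blueprint. -/

section Components

variable {α β : Type*}

/-- The connected components of `G` that are copies of `T`. -/
def componentsIso (G : SimpleGraph α) (T : SimpleGraph β) : Set G.ConnectedComponent :=
  {c | Nonempty (G.induce c.supp ≃g T)}

/-- The connected components of `G` that are trees on fewer than `r` vertices. -/
def smallTreeComponents (G : SimpleGraph α) (r : ℕ) : Set G.ConnectedComponent :=
  {c | (G.induce c.supp).IsTree ∧ Nat.card c.supp < r}

/-- Labelled trees on fewer than `r` vertices, one vertex set `Fin t` for each order `t < r`;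
every small tree component is isomorphic to one of these finitely many trees. -/
abbrev SmallTree (r : ℕ) : Type := Σ t : Fin r, {T : SimpleGraph (Fin t) // T.IsTree}

noncomputable instance (r : ℕ) : Fintype (SmallTree r) := Fintype.ofFinite _

theorem SmallTree.exists_iso [Finite α] {G : SimpleGraph α} {r : ℕ} (hG : G.IsTree)
    (hr : Nat.card α < r) : ∃ T : SmallTree r, Nonempty (G ≃g T.2.1) := by
  have := Fintype.ofFinite α
  rw [Nat.card_eq_fintype_card] at hr
  exact ⟨⟨⟨_, hr⟩, G.overFin rfl, (G.overFinIso rfl).isTree_iff.1 hG⟩, ⟨G.overFinIso rfl⟩⟩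

theorem ncard_smallTreeComponents_le_sum [Finite α] (G : SimpleGraph α) (r : ℕ) :
    (smallTreeComponents G r).ncard ≤ ∑ T : SmallTree r, (componentsIso G T.2.1).ncard := by
  have hcover : smallTreeComponents G r ⊆ ⋃ T : SmallTree r, componentsIso G T.2.1 :=
    fun _ hc => Set.mem_iUnion.2 (SmallTree.exists_iso hc.1 hc.2)
  exact (Set.ncard_le_ncard hcover).trans (Set.ncard_iUnion_le_of_fintype _)

theorem QuasiFinite.exists_ncard_smallTreeComponents_le {𝓕 : GraphFam} (h𝓕 : QuasiFinite 𝓕)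
    (r : ℕ) : ∃ M : ℕ, ∀ F ∈ 𝓕, (smallTreeComponents F.2 r).ncard ≤ M := by
  choose C hC using fun T : SmallTree r => h𝓕 T.1 T.2.1 T.2.2
  exact ⟨∑ T, C T, fun F hF => (ncard_smallTreeComponents_le_sum F.2 r).trans
    (Finset.sum_le_sum fun T _ => hC T F hF)⟩

end Components

section EdgeCount

variable {α : Type*} [Finite α] {G : SimpleGraph α} {r : ℕ}

theorem sum_card_edgeSet_induce_le {ι : Type*} [Fintype ι] (G : SimpleGraph α) {s : ι → Set α}
    (hs : Pairwise fun i j => Disjoint (s i) (s j)) :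
    ∑ i, Nat.card (G.induce (s i)).edgeSet ≤ Nat.card G.edgeSet := by
  rw [← Nat.card_sigma]
  refine Nat.card_le_card_of_injective
    (fun e : Σ i, (G.induce (s i)).edgeSet => (Embedding.induce (s e.1)).mapEdgeSet e.2) ?_
  rintro ⟨i, e⟩ ⟨j, f⟩ h
  have hmap : Sym2.map Subtype.val e.1 = Sym2.map Subtype.val f.1 := congrArg Subtype.val h
  obtain ⟨v, hv⟩ : ∃ v, v ∈ e.1 := ⟨_, Sym2.out_fst_mem e.1⟩
  obtain ⟨w, -, hwv⟩ : ∃ w ∈ f.1, w.1 = v.1 := by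
    rw [← Sym2.mem_map, ← hmap]
    exact Sym2.mem_map.2 ⟨v, hv, rfl⟩
  obtain rfl : i = j := by_contra fun hij => Set.disjoint_left.1 (hs hij) v.2 (hwv ▸ w.2)
  exact congrArg (Sigma.mk i) ((Embedding.induce (s i)).mapEdgeSet.injective h)

theorem sum_card_supp (G : SimpleGraph α) [Fintype G.ConnectedComponent] :
    ∑ c : G.ConnectedComponent, Nat.card c.supp = Nat.card α := by
  rw [← Nat.card_sigma]
  exact Nat.card_congr (Equiv.sigmaFiberEquiv G.connectedComponentMk)

theorem mul_card_le_card_edgeSet_of_connected (hG : G.Connected) (hr : 1 ≤ r)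
    (htree : G.IsTree → r ≤ Nat.card α) :
    (1 - 1 / (r : ℝ)) * Nat.card α ≤ Nat.card G.edgeSet := by
  have hr0 : (0 : ℝ) < r := by exact_mod_cast hr
  by_cases hT : G.IsTree
  · have hcard : (Nat.card G.edgeSet + 1 : ℝ) = Nat.card α := by
      exact_mod_cast (isTree_iff_connected_and_card.1 hT).2
    have hbig : 1 ≤ 1 / (r : ℝ) * Nat.card α := by
      rw [one_div_mul_eq_div, one_le_div hr0]
      exact_mod_cast htree hT
    linarith
  · have hne : Nat.card G.edgeSet + 1 ≠ Nat.card α := fun h =>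
      hT (isTree_iff_connected_and_card.2 ⟨hG, h⟩)
    have hle := hG.card_vert_le_card_edgeSet_add_one
    have hcard : (Nat.card α : ℝ) ≤ Nat.card G.edgeSet := by
      exact_mod_cast (by omega : Nat.card α ≤ Nat.card G.edgeSet)
    have hpos : 0 ≤ 1 / (r : ℝ) * Nat.card α := by positivity
    linarith

open Classical in
theorem mul_card_supp_le (hr : 1 ≤ r) (c : G.ConnectedComponent) :
    (1 - 1 / (r : ℝ)) * Nat.card c.supp ≤
      Nat.card (G.induce c.supp).edgeSet + if c ∈ smallTreeComponents G r then 1 else 0 := by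
  have hconn : (G.induce c.supp).Connected := c.connected_toSimpleGraph
  split_ifs with hc
  · have hcard : (Nat.card c.supp : ℝ) ≤ Nat.card (G.induce c.supp).edgeSet + 1 := by
      exact_mod_cast hconn.card_vert_le_card_edgeSet_add_one
    have hpos : 0 ≤ 1 / (r : ℝ) * Nat.card c.supp := by positivity
    linarith
  · rw [add_zero]
    exact mul_card_le_card_edgeSet_of_connected hconn hr
      fun htree => not_lt.1 fun hlt => hc ⟨htree, hlt⟩

theorem mul_card_le_card_edgeSet_add_ncard_smallTreeComponents (G : SimpleGraph α) (hr : 1 ≤ r) :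
    (1 - 1 / (r : ℝ)) * Nat.card α ≤ Nat.card G.edgeSet + (smallTreeComponents G r).ncard := by
  classical
  have := Fintype.ofFinite G.ConnectedComponent
  calc (1 - 1 / (r : ℝ)) * Nat.card α
      = ∑ c : G.ConnectedComponent, (1 - 1 / (r : ℝ)) * Nat.card c.supp := by
        rw [← sum_card_supp G, Nat.cast_sum, Finset.mul_sum]
    _ ≤ ∑ c : G.ConnectedComponent, ((Nat.card (G.induce c.supp).edgeSet : ℝ) +
          if c ∈ smallTreeComponents G r then 1 else 0) :=
        Finset.sum_le_sum fun c _ => mul_card_supp_le hr c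
    _ = (∑ c : G.ConnectedComponent, Nat.card (G.induce c.supp).edgeSet : ℕ) +
          (smallTreeComponents G r).ncard := by
        rw [Finset.sum_add_distrib, Finset.sum_boole, Nat.cast_sum, Set.ncard_eq_toFinset_card',
          Set.toFinset_card, Fintype.card_subtype]
    _ ≤ Nat.card G.edgeSet + (smallTreeComponents G r).ncard := by
        gcongr
        exact sum_card_edgeSet_induce_le G (pairwise_disjoint_supp_connectedComponent G)

theorem mul_card_sub_le_card_edgeSet (G : SimpleGraph α) (hr : 1 ≤ r) {N : ℕ}
    (hN : ∀ T : SmallTree r, (componentsIso G T.2.1).ncard ≤ N) :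
    (1 - 1 / (r : ℝ)) * Nat.card α - (Fintype.card (SmallTree r) * N : ℕ) ≤
      Nat.card G.edgeSet := by
  have hcount : (smallTreeComponents G r).ncard ≤ Fintype.card (SmallTree r) * N :=
    (ncard_smallTreeComponents_le_sum G r).trans (Finset.sum_le_card_nsmul _ _ _ fun T _ => hN T)
  have hedges := mul_card_le_card_edgeSet_add_ncard_smallTreeComponents G hr
  have : ((smallTreeComponents G r).ncard : ℝ) ≤ (Fintype.card (SmallTree r) * N : ℕ) := by
    exact_mod_cast hcount
  linarith

end EdgeCount

section Saturation

variable {α β γ : Type*} {G : SimpleGraph α} {G' : SimpleGraph β} {F : SimpleGraph γ}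

theorem contains_iff_isContained_s17 : Contains G F ↔ F ⊑ G :=
  ⟨fun ⟨f, hf⟩ => ⟨⟨⟨f, hf _ _⟩, f.injective⟩⟩,
    fun ⟨f⟩ => ⟨f.toEmbedding, fun _ _ => f.toHom.map_adj⟩⟩

theorem sup_edge_isContained (f : Copy G G') (u v : α) :
    G ⊔ edge u v ⊑ G' ⊔ edge (f u) (f v) := by
  have hinj : Function.Injective f := f.injective
  refine ⟨⟨⟨f, fun {a b} hab => ?_⟩, hinj⟩⟩
  simp only [sup_adj, edge_adj, hinj.eq_iff, hinj.ne_iff] at hab ⊢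
  exact hab.imp_left f.toHom.map_adj

theorem FamSaturated.of_copies {𝓕 : GraphFam} (hG : FamSaturated 𝓕 G)
    (hfree : ∀ F ∈ 𝓕, F.2 ⊑ G' → F.2 ⊑ G)
    (hcopy : ∀ u v, ∃ f : Copy G G', u ∈ Set.range f ∧ v ∈ Set.range f) : FamSaturated 𝓕 G' := by
  refine ⟨fun F hF hc => hG.1 F hF ?_, fun u v huv hadj => ?_⟩
  · exact contains_iff_isContained_s17.2 (hfree F hF (contains_iff_isContained_s17.1 hc))
  · obtain ⟨f, ⟨u, rfl⟩, v, rfl⟩ := hcopy u v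
    obtain ⟨F, hF, hc⟩ := hG.2 u v (ne_of_apply_ne f huv) fun h => hadj (f.toHom.map_adj h)
    exact ⟨F, hF, contains_iff_isContained_s17.2
      ((contains_iff_isContained_s17.1 hc).trans (sup_edge_isContained f u v))⟩

theorem FamSaturated.iso {𝓕 : GraphFam} (hG : FamSaturated 𝓕 G) (e : G ≃g G') :
    FamSaturated 𝓕 G' :=
  hG.of_copies (fun _ _ h => h.trans e.symm.isContained)
    fun u v => ⟨e.toCopy, e.surjective u, e.surjective v⟩

end Saturation

section UnionCopies

variable {α β γ : Type*} {H : SimpleGraph α} {T : SimpleGraph β} {F : SimpleGraph γ} {k l r : ℕ}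

theorem unionCopies_eq_sum_boxProd (H : SimpleGraph α) (k : ℕ) (T : SimpleGraph β) :
    unionCopies H k T = H ⊕g (⊥ : SimpleGraph (Fin k)) □ T := by
  ext (a | ⟨i, a⟩) (b | ⟨j, b⟩)
  · simpa [unionCopies, H.adj_comm b a] using fun h : H.Adj a b => h.ne
  · simp [unionCopies]
  · simp [unionCopies]
  · simp only [unionCopies, fromRel_adj, SimpleGraph.sum_adj, boxProd_adj, bot_adj, T.adj_comm b a,
      eq_comm (a := j)]
    have := T.ne_of_adj (a := a) (b := b)
    grind

/-- The homomorphism `H ∪ kT → H ∪ lT` that moves the `i`-th copy of `T` to the `σ i`-th one. -/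
def relabelCopies (H : SimpleGraph α) (T : SimpleGraph β) (σ : Fin k → Fin l) :
    unionCopies H k T →g unionCopies H l T where
  toFun := Sum.map id (Prod.map σ id)
  map_rel' {x y} hxy := by
    rw [unionCopies_eq_sum_boxProd] at hxy ⊢
    rcases x with a | ⟨i, a⟩ <;> rcases y with b | ⟨j, b⟩ <;> simp_all

/-- The indices of the copies of `T` in `H ∪ kT` that meet the range of `f`. -/
def hitCopies (f : γ → α ⊕ Fin k × β) : Set (Fin k) :=
  {i | ∃ v b, f v = Sum.inr (i, b)}

theorem relabelCopies_comp_injective {f : γ → α ⊕ Fin k × β} (hf : Function.Injective f)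
    {σ : Fin k → Fin l} (hσ : Set.InjOn σ (hitCopies f)) :
    Function.Injective (relabelCopies H T σ ∘ f) := by
  refine fun v w hvw => hf ?_
  have hvw' : Sum.map id (Prod.map σ id) (f v) = Sum.map id (Prod.map σ id) (f w) := hvw
  rcases hv : f v with a | ⟨i, a⟩ <;> rcases hw : f w with b | ⟨j, b⟩ <;>
    simp only [hv, hw, Sum.map_inl, Sum.map_inr, Sum.inl.injEq, Sum.inr.injEq, Prod.map_apply,
      Prod.mk.injEq, id_eq, reduceCtorEq] at hvw' ⊢
  · exact hvw'
  · exact ⟨hσ ⟨v, a, hv⟩ ⟨w, b, hw⟩ hvw'.1, hvw'.2⟩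

theorem isContained_unionCopies_of_ncard_hitCopies_le (f : Copy F (unionCopies H l T))
    (hk : 0 < k) (hf : (hitCopies f).ncard ≤ k) : F ⊑ unionCopies H k T := by
  have : Nonempty (Fin k) := ⟨⟨0, hk⟩⟩
  have hcard : (hitCopies f).encard ≤ (Set.univ : Set (Fin k)).encard := by
    rw [← (Set.toFinite (hitCopies f)).cast_ncard_eq, Set.encard_univ,
      ENat.card_eq_coe_fintype_card, Fintype.card_fin]
    exact_mod_cast hf
  obtain ⟨σ, -, hσ⟩ := (Set.toFinite (hitCopies f)).exists_injOn_of_encard_le hcard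
  exact ⟨⟨(relabelCopies H T σ).comp f.toHom,
    relabelCopies_comp_injective (H := H) (T := T) f.injective hσ⟩⟩

theorem exists_eq_inr_of_reachable {i : Fin k} {x y : α ⊕ Fin k × β}
    (hxy : (unionCopies H k T).Reachable x y) (hx : ∃ b, x = Sum.inr (i, b)) :
    ∃ b, y = Sum.inr (i, b) := by
  obtain ⟨p⟩ := hxy
  induction p with
  | nil => exact hx
  | @cons x z y hxz _ ih =>
    refine ih ?_
    obtain ⟨b, rfl⟩ := hx
    rw [unionCopies_eq_sum_boxProd] at hxz
    rcases z with a | ⟨j, c⟩ <;> simp_all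

theorem connectedComponentMk_mem_smallTreeComponents [Finite β] (hT : T.IsAcyclic)
    (hr : Nat.card β < r) (f : Copy F (unionCopies H k T)) {v : γ} {i : Fin k} {b : β}
    (hv : f v = Sum.inr (i, b)) : F.connectedComponentMk v ∈ smallTreeComponents F r := by
  have hlift (u : (F.connectedComponentMk v).supp) : ∃ b, f u = Sum.inr (i, b) :=
    exists_eq_inr_of_reachable ((ConnectedComponent.exact u.2).symm.map f.toHom) ⟨b, hv⟩
  choose g hg using hlift
  have hinj : Function.Injective g := fun u w h =>
    Subtype.ext (f.injective ((hg u).trans (h ▸ (hg w).symm)))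
  have hadj {u w : (F.connectedComponentMk v).supp} (h : F.Adj u w) : T.Adj (g u) (g w) := by
    have hf : (unionCopies H k T).Adj (f u) (f w) := f.toHom.map_adj h
    rw [hg, hg, unionCopies_eq_sum_boxProd] at hf
    simpa using hf
  exact ⟨⟨ConnectedComponent.connected_toSimpleGraph _, hT.comap ⟨g, hadj⟩ hinj⟩,
    (Nat.card_le_card_of_injective g hinj).trans_lt hr⟩

theorem ncard_hitCopies_le [Finite β] [Finite γ] (hT : T.IsAcyclic) (hr : Nat.card β < r)
    (f : Copy F (unionCopies H k T)) :
    (hitCopies f).ncard ≤ (smallTreeComponents F r).ncard := by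
  rw [← Nat.card_coe_set_eq, ← Nat.card_coe_set_eq]
  choose v b hv using fun i : hitCopies f => i.2
  refine Nat.card_le_card_of_injective (fun i => (⟨F.connectedComponentMk (v i),
    connectedComponentMk_mem_smallTreeComponents hT hr f (hv i)⟩ : smallTreeComponents F r)) ?_
  intro i j hij
  have hreach : F.Reachable (v i) (v j) := ConnectedComponent.exact (congrArg Subtype.val hij)
  obtain ⟨c, hc⟩ := exists_eq_inr_of_reachable (hreach.map f.toHom) ⟨b i, hv i⟩
  have : Sum.inr (j.1, b j) = Sum.inr (i.1, c) := (hv j).symm.trans hc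
  simp_all [Subtype.ext_iff]

theorem exists_forall_mem_range_relabelCopies (hl : 0 < l) (x : α ⊕ Fin l × β) :
    ∃ i : Fin l, ∀ {k : ℕ} (τ : Fin k → Fin l), i ∈ Set.range τ →
      x ∈ Set.range (relabelCopies H T τ) := by
  rcases x with a | ⟨i, b⟩
  · exact ⟨⟨0, hl⟩, fun τ _ => ⟨Sum.inl a, rfl⟩⟩
  · refine ⟨i, ?_⟩
    rintro k τ ⟨j, rfl⟩
    exact ⟨Sum.inr (j, b), rfl⟩

theorem exists_orderEmbedding_subset_range {s : Finset (Fin l)} (hs : s.card ≤ k) (hkl : k ≤ l) :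
    ∃ τ : Fin k ↪o Fin l, (s : Set (Fin l)) ⊆ Set.range τ := by
  obtain ⟨t, hst, -, ht⟩ := Finset.exists_subsuperset_card_eq s.subset_univ hs (by simpa using hkl)
  exact ⟨t.orderEmbOfFin ht, by simpa using hst⟩

theorem exists_copy_unionCopies_mem_range (H : SimpleGraph α) (T : SimpleGraph β) (hk : 2 ≤ k)
    (hkl : k ≤ l) (x y : α ⊕ Fin l × β) :
    ∃ f : Copy (unionCopies H k T) (unionCopies H l T), x ∈ Set.range f ∧ y ∈ Set.range f := by
  obtain ⟨i, hi⟩ := exists_forall_mem_range_relabelCopies (H := H) (T := T) (by omega) x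
  obtain ⟨j, hj⟩ := exists_forall_mem_range_relabelCopies (H := H) (T := T) (by omega) y
  obtain ⟨τ, hτ⟩ := exists_orderEmbedding_subset_range
    (Finset.card_le_two.trans hk : ({i, j} : Finset (Fin l)).card ≤ k) hkl
  have hinj : Function.Injective (relabelCopies H T τ) :=
    relabelCopies_comp_injective Function.injective_id τ.injective.injOn
  exact ⟨⟨relabelCopies H T τ, hinj⟩, hi τ (hτ (by simp)), hj τ (hτ (by simp))⟩

theorem FamSaturated.unionCopies_of_le {𝓕 : GraphFam} [Finite β] (hT : T.IsAcyclic)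
    (hr : Nat.card β < r) (h𝓕 : ∀ F ∈ 𝓕, (smallTreeComponents F.2 r).ncard ≤ k) (hk : 2 ≤ k)
    (hkl : k ≤ l) (h : FamSaturated 𝓕 (unionCopies H k T)) :
    FamSaturated 𝓕 (unionCopies H l T) := by
  refine h.of_copies (fun F hF ⟨f⟩ => ?_) (exists_copy_unionCopies_mem_range H T hk hkl)
  exact isContained_unionCopies_of_ncard_hitCopies_le f (by omega)
    ((ncard_hitCopies_le hT hr f).trans (h𝓕 F hF))

end UnionCopies

section Splitting

variable {α β : Type*} {G : SimpleGraph α} {T : SimpleGraph β}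

theorem nonempty_iso_sum_boxProd {ι : Type*} {s : ι → Set α}
    (hs : Pairwise fun i j => Disjoint (s i) (s j))
    (hadj : ∀ i u v, G.Adj u v → u ∈ s i → v ∈ s i) (φ : ∀ i, G.induce (s i) ≃g T) :
    Nonempty (G ≃g G.induce (⋃ i, s i)ᶜ ⊕g (⊥ : SimpleGraph ι) □ T) := by
  classical
  let copies : ι × β ≃ ⋃ i, s i := (Equiv.sigmaEquivProd ι β).symm.trans <|
    (Equiv.sigmaCongrRight fun i => (φ i).symm.toEquiv).trans
      (Set.unionEqSigmaOfDisjoint hs).symm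
  let e : ↥(⋃ i, s i)ᶜ ⊕ ι × β ≃ α :=
    ((Equiv.refl _).sumCongr copies).trans <|
      (Equiv.sumComm _ _).trans (Equiv.Set.sumCompl _)
  have he_inl (a) : e (Sum.inl a) = a := rfl
  have he_inr (i b) : e (Sum.inr (i, b)) = (φ i).symm b :=
    Set.coe_unionEqSigmaOfDisjoint_symm_apply hs _
  refine ⟨RelIso.symm ⟨e, ?_⟩⟩
  have hcross (a : ↥(⋃ i, s i)ᶜ) (i : ι) (b : β) : ¬ G.Adj a ((φ i).symm b) := fun h =>
    a.2 (Set.mem_iUnion.2 ⟨i, hadj i _ _ h.symm ((φ i).symm b).2⟩)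
  rintro (a | ⟨i, a⟩) (b | ⟨j, b⟩)
  · simp [he_inl]
  · simpa [he_inl, he_inr] using hcross a j b
  · simpa [he_inl, he_inr, G.adj_comm] using hcross b i a
  · rw [he_inr, he_inr]
    by_cases hij : i = j
    · subst hij
      simpa using (φ i).symm.map_adj_iff (v := a) (w := b)
    · have hna : ¬ G.Adj ((φ i).symm a) ((φ j).symm b) := fun h =>
        Set.disjoint_left.1 (hs hij) (hadj i _ _ h ((φ i).symm a).2) ((φ j).symm b).2
      simpa [hij] using hna

theorem exists_iso_unionCopies [Finite α] (G : SimpleGraph α) (T : SimpleGraph β) :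
    ∃ (m : ℕ) (H : SimpleGraph (Fin m)),
      Nonempty (G ≃g unionCopies H (componentsIso G T).ncard T) := by
  let c : Fin (componentsIso G T).ncard ≃ componentsIso G T := (Finite.equivFin _).symm
  have hdisj : Pairwise fun i j => Disjoint (c i).1.supp (c j).1.supp := fun i j hij =>
    pairwise_disjoint_supp_connectedComponent G (Subtype.coe_injective.ne (c.injective.ne hij))
  obtain ⟨e⟩ := nonempty_iso_sum_boxProd hdisj
    (fun i _ _ huv hu => (c i).1.mem_supp_of_adj_mem_supp hu huv) fun i => (c i).2.some
  have := Fintype.ofFinite ↥(⋃ i, (c i).1.supp)ᶜ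
  refine ⟨_, (G.induce (⋃ i, (c i).1.supp)ᶜ).overFin rfl, ?_⟩
  rw [unionCopies_eq_sum_boxProd]
  exact ⟨e.trans (Iso.sumCongr (overFinIso _ rfl) Iso.refl)⟩

end Splitting

/-- The pair `(H, T)` satisfies the saturation condition for blueprints; `T` is allowed to be any
graph, so that being a tree is a separate condition. -/
def BlueprintSaturated (𝓕 : GraphFam) {α β : Type*} (H : SimpleGraph α) (T : SimpleGraph β) :
    Prop :=
  ∃ K : ℕ, ∀ k : ℕ, K ≤ k → FamSaturated 𝓕 (unionCopies H k T)

theorem FamSaturated.exists_blueprintSaturated {𝓕 : GraphFam} {α β : Type*} [Finite α] [Finite β]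
    {G : SimpleGraph α} {T : SimpleGraph β} {r M : ℕ} (hG : FamSaturated 𝓕 G) (hT : T.IsAcyclic)
    (hr : Nat.card β < r) (h𝓕 : ∀ F ∈ 𝓕, (smallTreeComponents F.2 r).ncard ≤ M)
    (hM : M + 2 ≤ (componentsIso G T).ncard) :
    ∃ (m : ℕ) (H : SimpleGraph (Fin m)) (k : ℕ),
      BlueprintSaturated 𝓕 H T ∧ Nonempty (G ≃g unionCopies H k T) := by
  obtain ⟨m, H, ⟨e⟩⟩ := exists_iso_unionCopies G T
  refine ⟨m, H, (componentsIso G T).ncard, ⟨(componentsIso G T).ncard, fun l hl => ?_⟩, ⟨e⟩⟩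
  exact (hG.iso e).unionCopies_of_le hT hr (fun F hF => (h𝓕 F hF).trans (by omega)) (by omega) hl

/-- For a quasi-finite family `𝓕` and every `r ≥ 1` there is a constant `C_r` such that every
`𝓕`-saturated graph on `n` vertices which is not of the form `H ∪ kT` for an `𝓕`-saturated
blueprint `(H,T)` with `|V(T)| < r` (i.e. `T` a tree on fewer than `r` vertices such that
`H ∪ k'T` is `𝓕`-saturated for all sufficiently large `k'`) has at least `(1 - 1/r)·n - C_r`
edges. -/
theorem stmt17 (𝓕 : GraphFam) (h1 : 𝓕.Nonempty) (h2 : ∀ F ∈ 𝓕, 1 ≤ Nat.card F.2.edgeSet)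
    (h3 : QuasiFinite 𝓕) :
    ∀ r : ℕ, 1 ≤ r → ∃ C : ℝ, ∀ (n : ℕ) (G : SimpleGraph (Fin n)),
      FamSaturated 𝓕 G →
      (¬ ∃ (t : ℕ) (T : SimpleGraph (Fin t)) (nH : ℕ) (H : SimpleGraph (Fin nH)) (k : ℕ),
        t < r ∧ T.IsTree ∧
          (∃ K : ℕ, ∀ k' : ℕ, K ≤ k' → FamSaturated 𝓕 (unionCopies H k' T)) ∧
          Nonempty (G ≃g unionCopies H k T)) →
      (1 - 1 / (r : ℝ)) * n - C ≤ (Nat.card G.edgeSet : ℝ) := by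
  intro r hr
  obtain ⟨M, hM⟩ := h3.exists_ncard_smallTreeComponents_le r
  refine ⟨(Fintype.card (SmallTree r) * (M + 2) : ℕ), fun n G hG hblue => ?_⟩
  have hfew : ∀ T : SmallTree r, (componentsIso G T.2.1).ncard ≤ M + 2 := by
    rintro ⟨t, T, hT⟩
    by_contra! hlt
    obtain ⟨m, H, k, hsat, hiso⟩ :=
      hG.exists_blueprintSaturated hT.isAcyclic (by simp) hM hlt.le
    exact hblue ⟨t, T, m, H, k, t.2, hT, hsat, hiso⟩
  simpa only [Nat.card_fin] using mul_card_sub_le_card_edgeSet G hr hfew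
end
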